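/- Let U be a squared four-dimensional Bessel process started at 0, τ₁^U := inf{ t ≥ 0 : Ū(t) − U(t) ≥ 1 } with Ū(t) := sup_{s ∈ [0,t]} U(s), and A(t) := ∫₀^t U(s) ds. Then E[ A(τ₁^U) ] = E[ ∫₀^{τ₁^U} U(s) ds ] < ∞. -/

import Mathlib

open MeasureTheory ProbabilityTheory Real Set Filter

noncomputable section

variable {Ω : Type*} [MeasurableSpace Ω]

/-- A standard one-dimensional Brownian motion (indexed by `ℝ`, with the relevant
properties required for nonnegative times): starts at `0`, has continuous paths,
independent increments, and Gaussian increments of variance `t - s`. -/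
structure IsStdBM (P : Measure Ω) (B : ℝ → Ω → ℝ) : Prop where
  measurable : ∀ t : ℝ, Measurable (B t)
  start : ∀ ω, B 0 ω = 0
  cont : ∀ ω, Continuous fun t => B t ω
  indep : ∀ (n : ℕ) (t : Fin (n + 1) → ℝ), (∀ i, 0 ≤ t i) → Monotone t →
    iIndepFun
      (fun (i : Fin n) ω => B (t i.succ) ω - B (t i.castSucc) ω) P
  gauss : ∀ s t : ℝ, 0 ≤ s → s ≤ t →
    P.map (fun ω => B t ω - B s ω) = gaussianReal 0 (Real.toNNReal (t - s))

/-- A standard `d`-dimensional Brownian motion started at `0`: the coordinate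
processes are independent standard one-dimensional Brownian motions. -/
structure IsStdBMVec (d : ℕ) (P : Measure Ω) (B : ℝ → Ω → EuclideanSpace ℝ (Fin d)) : Prop where
  coord : ∀ i : Fin d, IsStdBM P (fun t ω => B t ω i)
  indepCoord : iIndepFun
    (fun (i : Fin d) ω => fun t : ℝ => B t ω i) P

/-- Last zero of `W` in `[0,1]`. -/
def lastZero (W : ℝ → Ω → ℝ) (ω : Ω) : ℝ := sSup {t ∈ Icc (0:ℝ) 1 | W t ω = 0}

/-- `m` is a standard Brownian meander: obtained from a Brownian motion `W` by
`m s = |W (g + s (1 - g))| / √(1 - g)`, where `g` is the last zero of `W` before time `1`. -/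
def IsBrownianMeander (P : Measure Ω) (m : ℝ → Ω → ℝ) : Prop :=
  ∃ W : ℝ → Ω → ℝ, IsStdBM P W ∧
    ∀ ω, ∀ s ∈ Icc (0:ℝ) 1,
      m s ω = |W (lastZero W ω + s * (1 - lastZero W ω)) ω| / Real.sqrt (1 - lastZero W ω)

/-- Running maximum `X̄(t) = sup_{s ∈ [0,t]} X(s)`. -/
def runMax (X : ℝ → Ω → ℝ) (t : ℝ) (ω : Ω) : ℝ := ⨆ s : Icc (0:ℝ) t, X s ω

/-- Maximal drawdown on `[0,T]` : `sup_{s ∈ [0,T]} (X̄(s) - X(s))`. -/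
def maxDDOn (X : ℝ → Ω → ℝ) (T : ℝ) (ω : Ω) : ℝ := ⨆ s : Icc (0:ℝ) T, (runMax X s ω - X s ω)

/-- Drawdown time `τ_λ^X := inf {t ≥ 0 : X̄(t) - X(t) ≥ λ}`. -/
def ddTime (lam : ℝ) (X : ℝ → Ω → ℝ) (ω : Ω) : ℝ :=
  sInf {t | 0 ≤ t ∧ lam ≤ runMax X t ω - X t ω}

/-- Three-dimensional Bessel process built from a 3-dimensional Brownian motion. -/
def bessel3 (β : ℝ → Ω → EuclideanSpace ℝ (Fin 3)) (t : ℝ) (ω : Ω) : ℝ := ‖β t ω‖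

/-- Squared four-dimensional Bessel process built from a 4-dimensional Brownian motion. -/
def sqBessel4 (γ : ℝ → Ω → EuclideanSpace ℝ (Fin 4)) (t : ℝ) (ω : Ω) : ℝ := ‖γ t ω‖ ^ 2

end

open scoped ENNReal

/-- Unit increments of the coordinates. -/
def bmIncr {Ω : Type*} (γ : ℝ → Ω → EuclideanSpace ℝ (Fin 4)) (p : Fin 4 × ℕ) (ω : Ω) : ℝ :=
  γ ((p.2 : ℝ) + 1) ω p.1 - γ (p.2 : ℝ) ω p.1

lemma bmIncr_measurable {Ω : Type*} [MeasurableSpace Ω] {P : Measure Ω}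
    {γ : ℝ → Ω → EuclideanSpace ℝ (Fin 4)} (hγ : IsStdBMVec 4 P γ) (p : Fin 4 × ℕ) :
    Measurable (bmIncr γ p) :=
  ((hγ.coord p.1).measurable _).sub ((hγ.coord p.1).measurable _)

lemma bmIncr_map {Ω : Type*} [MeasurableSpace Ω] {P : Measure Ω}
    {γ : ℝ → Ω → EuclideanSpace ℝ (Fin 4)} (hγ : IsStdBMVec 4 P γ) (p : Fin 4 × ℕ) :
    P.map (bmIncr γ p) = gaussianReal 0 1 := by
  have := (hγ.coord p.1).gauss (p.2 : ℝ) ((p.2 : ℝ) + 1) (by positivity) (by linarith)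
  rw [add_sub_cancel_left, Real.toNNReal_one] at this
  exact this

lemma bmIncr_indep {Ω : Type*} [MeasurableSpace Ω] {P : Measure Ω}
    {γ : ℝ → Ω → EuclideanSpace ℝ (Fin 4)} (hγ : IsStdBMVec 4 P γ) :
    iIndepFun (bmIncr γ) P := by
  have key := iIndepFun_uncurry' (P := P) (X := fun (i : Fin 4) (k : ℕ) => bmIncr γ (i, k))
    (fun i k => bmIncr_measurable hγ (i, k)) ?_ ?_
  · exact key
  · have := hγ.indepCoord.comp (fun _ (f : ℝ → ℝ) (k : ℕ) => f ((k : ℝ) + 1) - f (k : ℝ))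
      (fun _ => by fun_prop)
    exact this
  · intro i
    rw [iIndepFun_iff_finset]
    intro s
    obtain ⟨N, hN⟩ : ∃ N, ∀ k ∈ s, k < N := by
      refine ⟨s.sup id + 1, fun k hk => ?_⟩
      have := Finset.le_sup (f := id) hk
      simp at this; omega
    have h := (hγ.coord i).indep N (fun j => ((j : ℕ) : ℝ)) (fun _ => by positivity)
      (fun a b hab => by
        have h' : (a : ℕ) ≤ (b : ℕ) := hab
        exact Nat.cast_le.2 h')
    have h2 := h.precomp (g := fun k : s => (⟨k.1, hN k.1 k.2⟩ : Fin N))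
      (fun a b hab => Subtype.ext (Fin.mk.inj_iff.1 hab))
    convert h2 using 2 with k
    ext ω
    simp [bmIncr, Finset.restrict]

/-- Event that there is no unit drop on the blocks before `n`. -/
def noDrop {Ω : Type*} (γ : ℝ → Ω → EuclideanSpace ℝ (Fin 4)) (n : ℕ) : Set Ω :=
  {ω | ∀ k < n, sqBessel4 γ ((2 * k + 1 : ℕ) : ℝ) ω - sqBessel4 γ ((2 * k + 2 : ℕ) : ℝ) ω < 1}

def sgB (b : Bool) : ℝ := if b then 1 else -1

def upSet (b : Bool) : Set ℝ := {x | sgB b * x ∈ Icc (1 : ℝ) 2}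
def downSet (b : Bool) : Set ℝ := {x | sgB b * x ∈ Icc (-1 : ℝ) (-1 / 2)}

lemma upSet_meas (b : Bool) : MeasurableSet (upSet b) :=
  (measurable_const.mul measurable_id) measurableSet_Icc
lemma downSet_meas (b : Bool) : MeasurableSet (downSet b) :=
  (measurable_const.mul measurable_id) measurableSet_Icc

lemma gauss_pos_of_Icc {s : Set ℝ} {a b : ℝ} (hab : a < b) (h : Icc a b ⊆ s) :
    0 < gaussianReal 0 1 s := by
  rw [pos_iff_ne_zero]
  intro h0
  have h1 := gaussianReal_absolutelyContinuous' 0 (v := 1) one_ne_zero (measure_mono_null h h0)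
  simp [Real.volume_Icc] at h1
  linarith

lemma exists_lower : ∃ m : ℝ≥0∞, 0 < m ∧ ∀ b, m ≤ gaussianReal 0 1 (upSet b) ∧
    m ≤ gaussianReal 0 1 (downSet b) := by
  refine ⟨min (min (gaussianReal 0 1 (upSet true)) (gaussianReal 0 1 (upSet false)))
    (min (gaussianReal 0 1 (downSet true)) (gaussianReal 0 1 (downSet false))), ?_, ?_⟩
  · refine lt_min (lt_min ?_ ?_) (lt_min ?_ ?_)
    · refine gauss_pos_of_Icc (a := 1) (b := 2) (by norm_num) fun x hx => ?_
      simp only [upSet, sgB, mem_ofPred_eq, mem_Icc] at hx ⊢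
      norm_num; exact hx
    · refine gauss_pos_of_Icc (a := -2) (b := -1) (by norm_num) fun x hx => ?_
      simp only [upSet, sgB, mem_ofPred_eq, mem_Icc] at hx ⊢
      norm_num; constructor <;> linarith
    · refine gauss_pos_of_Icc (a := -1) (b := -1/2) (by norm_num) fun x hx => ?_
      simp only [downSet, sgB, mem_ofPred_eq, mem_Icc] at hx ⊢
      norm_num at *; constructor <;> linarith
    · refine gauss_pos_of_Icc (a := 1/2) (b := 1) (by norm_num) fun x hx => ?_
      simp only [downSet, sgB, mem_ofPred_eq, mem_Icc] at hx ⊢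
      norm_num at *; constructor <;> linarith
  · intro b
    cases b <;> constructor <;> simp

/-- one-coordinate drop estimate -/
lemma coord_drop (x g h : ℝ) (b : Bool) (hb : b = decide (0 ≤ x)) (hg : g ∈ upSet b)
    (hh : h ∈ downSet b) : 1 / 2 ≤ (x + g) ^ 2 - (x + g + h) ^ 2 := by
  subst hb
  simp only [upSet, downSet, sgB, mem_ofPred_eq, mem_Icc] at hg hh
  by_cases hx : 0 ≤ x
  · simp [hx] at hg hh; nlinarith
  · simp [hx] at hg hh; push Not at hx; nlinarith

def goodSet (n : ℕ) (σ : Fin 4 → Bool) (p : Fin 4 × ℕ) : Set ℝ :=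
  if p.2 = 2 * n then upSet (σ p.1) else downSet (σ p.1)

def futIdx (n : ℕ) : Finset (Fin 4 × ℕ) := Finset.univ ×ˢ {2 * n, 2 * n + 1}
def pastIdx (n : ℕ) : Finset (Fin 4 × ℕ) := Finset.univ ×ˢ Finset.range (2 * n)

def goodEv {Ω : Type*} (γ : ℝ → Ω → EuclideanSpace ℝ (Fin 4)) (n : ℕ) (σ : Fin 4 → Bool) : Set Ω :=
  ⋂ p ∈ futIdx n, bmIncr γ p ⁻¹' goodSet n σ p

noncomputable def signs {Ω : Type*} (γ : ℝ → Ω → EuclideanSpace ℝ (Fin 4)) (n : ℕ) (ω : Ω) : Fin 4 → Bool :=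
  fun i => decide (0 ≤ γ ((2 * n : ℕ) : ℝ) ω i)

lemma sqBessel4_eq {Ω : Type*} (γ : ℝ → Ω → EuclideanSpace ℝ (Fin 4)) (t : ℝ) (ω : Ω) :
    sqBessel4 γ t ω = ∑ i, (γ t ω i) ^ 2 := by
  simp [sqBessel4, EuclideanSpace.norm_sq_eq]

lemma drop_of_good {Ω : Type*} (γ : ℝ → Ω → EuclideanSpace ℝ (Fin 4)) (n : ℕ) (ω : Ω)
    (h : ω ∈ goodEv γ n (signs γ n ω)) :
    1 ≤ sqBessel4 γ ((2 * n + 1 : ℕ) : ℝ) ω - sqBessel4 γ ((2 * n + 2 : ℕ) : ℝ) ω := by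
  rw [sqBessel4_eq, sqBessel4_eq, ← Finset.sum_sub_distrib]
  have key : ∀ i : Fin 4, (1 / 2 : ℝ) ≤ (γ ((2 * n + 1 : ℕ) : ℝ) ω i) ^ 2
      - (γ ((2 * n + 2 : ℕ) : ℝ) ω i) ^ 2 := by
    intro i
    simp only [goodEv, mem_iInter] at h
    have h1 := h (i, 2 * n) (by simp [futIdx])
    have h2 := h (i, 2 * n + 1) (by simp [futIdx])
    simp only [goodSet, mem_preimage, if_true] at h1
    simp only [goodSet, mem_preimage] at h2
    rw [if_neg (by omega)] at h2
    have := coord_drop _ _ _ _ rfl h1 h2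
    have e1 : γ ((2 * n : ℕ) : ℝ) ω i + bmIncr γ (i, 2 * n) ω = γ ((2 * n + 1 : ℕ) : ℝ) ω i := by
      simp [bmIncr]
    have e2 : γ ((2 * n + 1 : ℕ) : ℝ) ω i + bmIncr γ (i, 2 * n + 1) ω
        = γ ((2 * n + 2 : ℕ) : ℝ) ω i := by
      have : (2 * (n:ℝ) + 1 + 1) = 2 * n + 2 := by ring
      simp [bmIncr, this]
    rwa [e1, e2] at this
  calc (1 : ℝ) ≤ ∑ i : Fin 4, (1 / 2 : ℝ) := by norm_num
    _ ≤ _ := Finset.sum_le_sum fun i _ => key i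

/-- joint past increments -/
def pastF {Ω : Type*} (γ : ℝ → Ω → EuclideanSpace ℝ (Fin 4)) (n : ℕ) (ω : Ω) :
    pastIdx n → ℝ := fun p => bmIncr γ p ω

lemma past_meas {Ω : Type*} [MeasurableSpace Ω] {P : Measure Ω}
    {γ : ℝ → Ω → EuclideanSpace ℝ (Fin 4)} (hγ : IsStdBMVec 4 P γ) (n : ℕ) (i : Fin 4) (j : ℕ)
    (hj : j ≤ 2 * n) :
    Measurable[MeasurableSpace.comap (pastF γ n) inferInstance] (fun ω => γ (j : ℝ) ω i) := by
  induction j with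
  | zero =>
    have : (fun ω => γ ((0 : ℕ) : ℝ) ω i) = fun _ => (0 : ℝ) := by
      ext ω; simpa using (hγ.coord i).start ω
    rw [this]; exact measurable_const
  | succ j ih =>
    have hmem : (i, j) ∈ pastIdx n := by simp [pastIdx]; omega
    have h1 : Measurable[MeasurableSpace.comap (pastF γ n) inferInstance] (bmIncr γ (i, j)) :=
      (measurable_pi_apply (⟨(i, j), hmem⟩ : pastIdx n)).comp (comap_measurable (pastF γ n))
    have : (fun ω => γ ((j + 1 : ℕ) : ℝ) ω i) = fun ω => γ (j : ℝ) ω i + bmIncr γ (i, j) ω := by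
      ext ω; simp [bmIncr]
    rw [this]
    exact @Measurable.add _ _ _ _ _ (_) _ _ (ih (by omega)) h1

lemma decay_step {Ω : Type*} [MeasurableSpace Ω] {P : Measure Ω} [IsProbabilityMeasure P]
    {γ : ℝ → Ω → EuclideanSpace ℝ (Fin 4)} (hγ : IsStdBMVec 4 P γ) {m : ℝ≥0∞}
    (hm : ∀ b, m ≤ gaussianReal 0 1 (upSet b) ∧ m ≤ gaussianReal 0 1 (downSet b)) (n : ℕ) :
    P (noDrop γ (n + 1)) ≤ (1 - m ^ 8) * P (noDrop γ n) := by
  have hgs : ∀ σ p, MeasurableSet (goodSet n σ p) := by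
    intro σ p; unfold goodSet; split_ifs
    · exact upSet_meas _
    · exact downSet_meas _
  have hP : ∀ σ, m ^ 8 ≤ P (goodEv γ n σ) := by
    intro σ
    unfold goodEv
    rw [(bmIncr_indep hγ).measure_inter_preimage_eq_mul (futIdx n) (fun p _ => hgs σ p)]
    have : m ^ 8 = ∏ p ∈ futIdx n, m := by simp [futIdx]
    rw [this]
    refine Finset.prod_le_prod' fun p _ => ?_
    rw [← Measure.map_apply (bmIncr_measurable hγ p) (hgs σ p), bmIncr_map hγ]
    unfold goodSet; split_ifs
    · exact (hm _).1
    · exact (hm _).2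
  have hge : ∀ σ, MeasurableSet (goodEv γ n σ) := fun σ =>
    Finset.measurableSet_biInter _ fun p _ => bmIncr_measurable hγ p (hgs σ p)
  have hpast : ∀ i j, j ≤ 2 * n →
      Measurable[MeasurableSpace.comap (pastF γ n) inferInstance] (fun ω => γ (j : ℝ) ω i) :=
    fun i j hj => past_meas hγ n i j hj
  have hle : MeasurableSpace.comap (pastF γ n) inferInstance ≤ ‹MeasurableSpace Ω› :=
    (measurable_pi_lambda _ fun p : pastIdx n => bmIncr_measurable hγ (p : Fin 4 × ℕ)).comap_le
  have hU : ∀ j : ℕ, j ≤ 2 * n →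
      Measurable[MeasurableSpace.comap (pastF γ n) inferInstance] (sqBessel4 γ (j : ℝ)) := by
    intro j hj
    have : sqBessel4 γ (j : ℝ) = fun ω => ∑ i, (γ (j : ℝ) ω i) ^ 2 := by
      ext ω; exact sqBessel4_eq _ _ _
    rw [this]
    exact Finset.measurable_fun_sum _ fun i _ => (hpast i j hj).pow_const 2
  have hnd : MeasurableSet[MeasurableSpace.comap (pastF γ n) inferInstance] (noDrop γ n) := by
    have : noDrop γ n = ⋂ k ∈ Finset.range n, {ω | sqBessel4 γ ((2 * k + 1 : ℕ) : ℝ) ω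
        - sqBessel4 γ ((2 * k + 2 : ℕ) : ℝ) ω < 1} := by
      ext ω; simp [noDrop]
    rw [this]
    refine Finset.measurableSet_biInter _ fun k hk => ?_
    have hk' := Finset.mem_range.1 hk
    have := (hU (2 * k + 1) (by omega)).sub (hU (2 * k + 2) (by omega))
    exact this measurableSet_Iio
  have hsg : Measurable[MeasurableSpace.comap (pastF γ n) inferInstance] (signs γ n) := by
    refine @measurable_pi_lambda _ _ _ (_) _ _ fun i => ?_
    have h0 : MeasurableSet[MeasurableSpace.comap (pastF γ n) inferInstance]
      {ω | 0 ≤ γ ((2 * n : ℕ) : ℝ) ω i} := hpast i (2 * n) le_rfl measurableSet_Ici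
    refine @measurable_to_bool _ (_) _ ?_
    convert h0 using 1
    ext ω; simp [signs]
  have hind : ∀ σ, P ((noDrop γ n ∩ signs γ n ⁻¹' {σ}) ∩ (goodEv γ n σ)ᶜ)
      = P (noDrop γ n ∩ signs γ n ⁻¹' {σ}) * P (goodEv γ n σ)ᶜ := by
    intro σ
    have hI := (bmIncr_indep hγ).indepFun_finset (pastIdx n) (futIdx n) (by
      rw [Finset.disjoint_left]; rintro ⟨i, k⟩ h1 h2
      simp [pastIdx, futIdx] at h1 h2; omega) (bmIncr_measurable hγ)
    rw [IndepFun_iff] at hI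
    refine hI _ _ (hnd.inter (hsg (measurableSet_singleton σ))) ?_
    refine MeasurableSet.compl ?_
    unfold goodEv
    refine Finset.measurableSet_biInter _ fun p hp => ?_
    have h1 : Measurable[MeasurableSpace.comap (fun ω (p : futIdx n) => bmIncr γ p ω)
      inferInstance] (bmIncr γ p) :=
      (measurable_pi_apply (⟨p, hp⟩ : futIdx n))
        |>.comp (comap_measurable (fun ω (p : futIdx n) => bmIncr γ p ω))
    exact h1 (hgs σ p)
  have hsub : noDrop γ (n + 1) ⊆
      ⋃ σ ∈ (Finset.univ : Finset (Fin 4 → Bool)),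
        ((noDrop γ n ∩ signs γ n ⁻¹' {σ}) ∩ (goodEv γ n σ)ᶜ) := by
    intro ω hω
    simp only [mem_iUnion]
    refine ⟨signs γ n ω, Finset.mem_univ _, ⟨fun k hk => hω k (by omega), rfl⟩, fun hg => ?_⟩
    have h1 := drop_of_good γ n ω hg
    have h2 := hω n (by omega)
    linarith
  calc P (noDrop γ (n + 1)) ≤ ∑ σ : Fin 4 → Bool,
        P ((noDrop γ n ∩ signs γ n ⁻¹' {σ}) ∩ (goodEv γ n σ)ᶜ) :=
        (measure_mono hsub).trans (measure_biUnion_finset_le _ _)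
    _ ≤ ∑ σ : Fin 4 → Bool, (1 - m ^ 8) * P (noDrop γ n ∩ signs γ n ⁻¹' {σ}) := by
        refine Finset.sum_le_sum fun σ _ => ?_
        rw [hind σ, mul_comm, prob_compl_eq_one_sub (hge σ)]
        gcongr
        exact hP σ
    _ = (1 - m ^ 8) * P (noDrop γ n) := by
        rw [← Finset.mul_sum]
        congr 1
        have := sum_measure_preimage_singleton (μ := P.restrict (noDrop γ n)) (f := signs γ n)
          Finset.univ (fun σ _ => (hsg.mono hle le_rfl) (measurableSet_singleton σ))
        simp only [Finset.coe_univ, preimage_univ, Measure.restrict_apply_univ] at this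
        rw [← this]
        refine Finset.sum_congr rfl fun σ _ => ?_
        rw [Measure.restrict_apply ((hsg.mono hle le_rfl) (measurableSet_singleton σ)), inter_comm]

lemma exists_decay {Ω : Type*} [MeasurableSpace Ω] {P : Measure Ω} [IsProbabilityMeasure P]
    {γ : ℝ → Ω → EuclideanSpace ℝ (Fin 4)} (hγ : IsStdBMVec 4 P γ) :
    ∃ r : ℝ, 0 < r ∧ r < 1 ∧ ∀ n, P (noDrop γ n) ≤ ENNReal.ofReal ((r ^ 2) ^ n) := by
  obtain ⟨m, hm0, hm⟩ := exists_lower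
  have hc : (1 - m ^ 8 : ℝ≥0∞) < 1 :=
    ENNReal.sub_lt_self (by simp) (by simp) (pow_ne_zero _ hm0.ne')
  set c : ℝ≥0∞ := 1 - m ^ 8 with hcdef
  have hcr : c.toReal < 1 := by
    have := (ENNReal.toReal_lt_toReal hc.ne_top ENNReal.one_ne_top).2 hc
    simpa using this
  have hc0 : 0 ≤ c.toReal := ENNReal.toReal_nonneg
  refine ⟨(1 + c.toReal) / 2, by positivity, by linarith, ?_⟩
  have hcc : c ≤ ENNReal.ofReal (((1 + c.toReal) / 2) ^ 2) := by
    rw [← ENNReal.ofReal_toReal hc.ne_top]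
    refine ENNReal.ofReal_le_ofReal ?_
    rw [ENNReal.ofReal_toReal hc.ne_top]
    nlinarith [sq_nonneg (1 - c.toReal)]
  intro n
  induction n with
  | zero => simpa using prob_le_one
  | succ n ih =>
    refine (decay_step hγ hm n).trans ?_
    rw [pow_succ _ n, mul_comm (_ ^ n), ENNReal.ofReal_mul (by positivity)]
    exact mul_le_mul' hcc ih

section
variable {Ω : Type*} [MeasurableSpace Ω] {P : Measure Ω}
    {γ : ℝ → Ω → EuclideanSpace ℝ (Fin 4)}

lemma U_nonneg (γ : ℝ → Ω → EuclideanSpace ℝ (Fin 4)) (t : ℝ) (ω : Ω) :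
    0 ≤ sqBessel4 γ t ω := by
  unfold sqBessel4; positivity

lemma U_cont (hγ : IsStdBMVec 4 P γ) (ω : Ω) : Continuous fun t => sqBessel4 γ t ω := by
  simp only [sqBessel4_eq]
  exact continuous_finset_sum _ fun i _ => ((hγ.coord i).cont ω).pow 2

lemma U_meas (hγ : IsStdBMVec 4 P γ) (t : ℝ) : Measurable (sqBessel4 γ t) := by
  have : sqBessel4 γ t = fun ω => ∑ i, (γ t ω i) ^ 2 := by
    ext ω; exact sqBessel4_eq _ _ _
  rw [this]
  exact Finset.measurable_fun_sum _ fun i _ => ((hγ.coord i).measurable t).pow_const 2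

lemma U_joint (hγ : IsStdBMVec 4 P γ) : Measurable (Function.uncurry (sqBessel4 γ)) :=
  measurable_uncurry_of_continuous_of_measurable (fun ω => U_cont hγ ω) (U_meas hγ)

lemma swap_aux (f : ℝ → Ω → ℝ) (hf : Measurable (Function.uncurry f)) :
    Measurable (fun p : Ω × ℝ => f p.2 p.1) := by
  have h : Measurable (fun p : Ω × ℝ => (p.2, p.1)) := measurable_snd.prodMk measurable_fst
  have := hf.comp h
  simpa [Function.comp_def, Function.uncurry] using this

lemma U_joint' (hγ : IsStdBMVec 4 P γ) : Measurable (fun p : Ω × ℝ => sqBessel4 γ p.2 p.1) :=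
  swap_aux _ (U_joint hγ)

lemma le_runMax (hγ : IsStdBMVec 4 P γ) (ω : Ω) {u t : ℝ} (hu : 0 ≤ u) (hut : u ≤ t) :
    sqBessel4 γ u ω ≤ runMax (sqBessel4 γ) t ω := by
  have hb : BddAbove (range fun s : Icc (0 : ℝ) t => sqBessel4 γ s ω) := by
    have := (isCompact_Icc (a := (0 : ℝ)) (b := t)).bddAbove_image (U_cont hγ ω).continuousOn
    rwa [image_eq_range] at this
  exact le_ciSup hb ⟨u, hu, hut⟩

lemma exists_runMax (hγ : IsStdBMVec 4 P γ) (ω : Ω) {t : ℝ} (ht : 0 ≤ t) :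
    ∃ u, 0 ≤ u ∧ u ≤ t ∧ runMax (sqBessel4 γ) t ω ≤ sqBessel4 γ u ω := by
  obtain ⟨u, hu, hm⟩ := (isCompact_Icc (a := (0 : ℝ)) (b := t)).exists_isMaxOn
    ⟨0, le_rfl, ht⟩ (U_cont hγ ω).continuousOn
  haveI : Nonempty (Icc (0 : ℝ) t) := ⟨⟨0, le_rfl, ht⟩⟩
  exact ⟨u, hu.1, hu.2, ciSup_le fun s => hm s.2⟩

/-- grid event equivalent to a unit drop before `s` -/
def gridEv {Ω : Type*} (γ : ℝ → Ω → EuclideanSpace ℝ (Fin 4)) (s : ℝ) : Set Ω :=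
  {ω | ∀ k : ℕ, ∃ n i j : ℕ, i ≤ j ∧ j ≤ n ∧ (1 : ℝ) - 1 / ((k : ℝ) + 1) <
    sqBessel4 γ (s * ((i : ℝ) / n)) ω - sqBessel4 γ (s * ((j : ℝ) / n)) ω}

lemma gridEv_meas (hγ : IsStdBMVec 4 P γ) (s : ℝ) : MeasurableSet (gridEv γ s) := by
  have : gridEv γ s = ⋂ k : ℕ, ⋃ n : ℕ, ⋃ i : ℕ, ⋃ j : ℕ, {ω | i ≤ j ∧ j ≤ n ∧
    (1 : ℝ) - 1 / ((k : ℝ) + 1) <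
    sqBessel4 γ (s * ((i : ℝ) / n)) ω - sqBessel4 γ (s * ((j : ℝ) / n)) ω} := by
    ext ω; simp [gridEv]
  rw [this]
  refine MeasurableSet.iInter fun k => MeasurableSet.iUnion fun n => MeasurableSet.iUnion fun i =>
    MeasurableSet.iUnion fun j => ?_
  refine (MeasurableSet.const _).inter ((MeasurableSet.const _).inter ?_)
  exact ((U_meas hγ _).sub (U_meas hγ _)) measurableSet_Ioi

lemma gridEv_iff (hγ : IsStdBMVec 4 P γ) {s : ℝ} (hs : 0 ≤ s) (ω : Ω) :
    ω ∈ gridEv γ s ↔ ∃ t, 0 ≤ t ∧ t ≤ s ∧ 1 ≤ runMax (sqBessel4 γ) t ω - sqBessel4 γ t ω := by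
  constructor
  · intro h
    have hK : IsCompact ((Icc (0 : ℝ) s ×ˢ Icc (0 : ℝ) s) ∩ {p | p.1 ≤ p.2}) :=
      (isCompact_Icc.prod isCompact_Icc).inter_right (isClosed_le continuous_fst continuous_snd)
    have hc : Continuous fun p : ℝ × ℝ => sqBessel4 γ p.1 ω - sqBessel4 γ p.2 ω :=
      ((U_cont hγ ω).comp continuous_fst).sub ((U_cont hγ ω).comp continuous_snd)
    obtain ⟨⟨u, v⟩, ⟨⟨hu, hv⟩, huv⟩, hmax⟩ := hK.exists_isMaxOn
      ⟨(0, 0), ⟨⟨⟨le_rfl, hs⟩, ⟨le_rfl, hs⟩⟩, le_refl (0 : ℝ)⟩⟩ hc.continuousOn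
    have hge : 1 ≤ sqBessel4 γ u ω - sqBessel4 γ v ω := by
      have hlt : ∀ k : ℕ, (1 : ℝ) - 1 / ((k : ℝ) + 1) ≤
          sqBessel4 γ u ω - sqBessel4 γ v ω := by
        intro k
        obtain ⟨n, i, j, hij, hjn, hlt⟩ := h k
        refine hlt.le.trans ?_
        have hj1 : (j : ℝ) / n ≤ 1 := div_le_one_of_le₀ (by exact_mod_cast hjn) (by positivity)
        have hij1 : (i : ℝ) / n ≤ (j : ℝ) / n := by gcongr
        have hi0 : (0 : ℝ) ≤ (i : ℝ) / n := by positivity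
        have hij2 := mul_le_mul_of_nonneg_left hij1 hs
        have hj2 := mul_le_mul_of_nonneg_left hj1 hs
        have hi2 := mul_nonneg hs hi0
        rw [mul_one] at hj2
        exact hmax (a := (s * ((i : ℝ) / n), s * ((j : ℝ) / n)))
          ⟨⟨⟨hi2, hij2.trans hj2⟩, ⟨hi2.trans hij2, hj2⟩⟩, hij2⟩
      have ht : Tendsto (fun k : ℕ => (1 : ℝ) - 1 / ((k : ℝ) + 1)) atTop (nhds (1 - 0)) :=
        tendsto_const_nhds.sub tendsto_one_div_add_atTop_nhds_zero_nat
      rw [sub_zero] at ht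
      exact le_of_tendsto' ht hlt
    refine ⟨v, hv.1, hv.2, ?_⟩
    have := le_runMax hγ ω hu.1 huv
    linarith
  · rintro ⟨t, ht0, hts, ht⟩ k
    obtain ⟨u, hu0, hut, hu⟩ := exists_runMax hγ ω ht0
    rcases hs.eq_or_lt with rfl | hs
    · have h1 : t = 0 := le_antisymm hts ht0
      have h2 : u = 0 := le_antisymm (hut.trans hts) hu0
      rw [h1] at ht hu; rw [h2] at hu; linarith
    have hlim : ∀ x : ℝ, 0 ≤ x → Tendsto (fun n : ℕ => sqBessel4 γ
        (s * ((⌊x / s * (n : ℝ)⌋₊ : ℝ) / n)) ω) atTop (nhds (sqBessel4 γ x ω)) := by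
      intro x hx
      have h1 : Tendsto (fun n : ℕ => (⌊x / s * (n : ℝ)⌋₊ : ℝ) / n) atTop (nhds (x / s)) :=
        (tendsto_nat_floor_mul_div_atTop (div_nonneg hx hs.le)).comp tendsto_natCast_atTop_atTop
      have h2 := h1.const_mul s
      rw [mul_div_cancel₀ _ hs.ne'] at h2
      exact ((U_cont hγ ω).tendsto x).comp h2
    have hl := (hlim u hu0).sub (hlim t ht0)
    have hpos : (0 : ℝ) < 1 / ((k : ℝ) + 1) := by positivity
    obtain ⟨n, hn⟩ := (hl.eventually (lt_mem_nhds
      (show (1 : ℝ) - 1 / ((k : ℝ) + 1) < _ by linarith))).exists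
    refine ⟨n, _, _, ?_, ?_, hn⟩
    · exact Nat.floor_mono (by gcongr)
    · refine Nat.floor_le_of_le ?_
      have : t / s ≤ 1 := (div_le_one hs).2 hts
      have hn0 : (0 : ℝ) ≤ n := by positivity
      nlinarith

lemma ddTime_nonneg (γ : ℝ → Ω → EuclideanSpace ℝ (Fin 4)) (ω : Ω) :
    0 ≤ ddTime 1 (sqBessel4 γ) ω := Real.sInf_nonneg fun _ ht => ht.1

lemma ddTime_meas (hγ : IsStdBMVec 4 P γ) : Measurable (ddTime 1 (sqBessel4 γ)) := by
  refine measurable_of_Iio fun s => ?_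
  rcases le_or_gt s 0 with hs | hs
  · convert MeasurableSet.empty
    ext ω
    have := ddTime_nonneg γ ω
    simp only [mem_preimage, mem_Iio, mem_empty_iff_false, iff_false, not_lt]
    linarith
  · have : ddTime 1 (sqBessel4 γ) ⁻¹' Iio s =
        (⋃ q : ℚ, ⋃ _ : 0 ≤ (q : ℝ) ∧ (q : ℝ) < s, gridEv γ q) ∪
          (⋃ N : ℕ, gridEv γ (N : ℝ))ᶜ := by
      ext ω
      simp only [mem_preimage, mem_Iio, mem_union, mem_iUnion, mem_compl_iff, exists_prop]
      constructor
      · intro h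
        by_cases hN : ∃ N : ℕ, ω ∈ gridEv γ (N : ℝ)
        · left
          obtain ⟨N, hN⟩ := hN
          obtain ⟨t0, h0, -, h1⟩ := (gridEv_iff hγ (Nat.cast_nonneg N) ω).1 hN
          obtain ⟨t, ⟨ht0, ht1⟩, hts⟩ := exists_lt_of_csInf_lt
            (show {t | 0 ≤ t ∧ 1 ≤ runMax (sqBessel4 γ) t ω - sqBessel4 γ t ω}.Nonempty from
              ⟨t0, h0, h1⟩) h
          obtain ⟨q, hq1, hq2⟩ := exists_rat_btwn hts
          exact ⟨q, ⟨ht0.trans hq1.le, hq2⟩,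
            (gridEv_iff hγ (ht0.trans hq1.le) ω).2 ⟨t, ht0, hq1.le, ht1⟩⟩
        · exact Or.inr hN
      · rintro (⟨q, ⟨hq0, hqs⟩, hq⟩ | h)
        · obtain ⟨t, h0, htq, h1⟩ := (gridEv_iff hγ hq0 ω).1 hq
          refine lt_of_le_of_lt (csInf_le ⟨0, fun _ h => h.1⟩ ⟨h0, h1⟩) (htq.trans_lt hqs)
        · have : {t | 0 ≤ t ∧ 1 ≤ runMax (sqBessel4 γ) t ω - sqBessel4 γ t ω} = ∅ := by
            rw [eq_empty_iff_forall_notMem]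
            rintro t ⟨ht0, ht1⟩
            exact h ⟨⌈t⌉₊, (gridEv_iff hγ (Nat.cast_nonneg _) ω).2 ⟨t, ht0, Nat.le_ceil t, ht1⟩⟩
          unfold ddTime
          rw [this, Real.sInf_empty]; exact hs
    rw [this]
    refine MeasurableSet.union ?_ ?_
    · exact MeasurableSet.iUnion fun q => MeasurableSet.iUnion fun _ => gridEv_meas hγ _
    · exact (MeasurableSet.iUnion fun N => gridEv_meas hγ _).compl

lemma integral_meas (hγ : IsStdBMVec 4 P γ) : StronglyMeasurable
    (fun ω => ∫ s in (0:ℝ)..(ddTime 1 (sqBessel4 γ) ω), sqBessel4 γ s ω) := by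
  have h1 : (fun ω => ∫ s in (0:ℝ)..(ddTime 1 (sqBessel4 γ) ω), sqBessel4 γ s ω) =
      fun ω => ∫ s, indicator {p : Ω × ℝ | 0 < p.2 ∧ p.2 ≤ ddTime 1 (sqBessel4 γ) p.1}
        (fun p => sqBessel4 γ p.2 p.1) (ω, s) := by
    ext ω
    rw [intervalIntegral.integral_of_le (ddTime_nonneg γ ω), ← integral_indicator measurableSet_Ioc]
    rfl
  rw [h1]
  refine StronglyMeasurable.integral_prod_right ?_
  refine (Measurable.indicator ?_ ?_).stronglyMeasurable
  · exact U_joint' hγ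
  · exact (measurableSet_lt measurable_const measurable_snd).inter
      (measurableSet_le measurable_snd ((ddTime_meas hγ).comp measurable_fst))

/-- fourth moment of a standard Gaussian -/
noncomputable def gM : ℝ≥0∞ := ∫⁻ x, ENNReal.ofReal (x ^ 4) ∂(gaussianReal 0 1)

lemma gM_lt_top : gM < ∞ := by
  have h := (memLp_id_gaussianReal (μ := 0) (v := 1) 4).integrable_norm_pow (p := 4) (by simp)
  have h2 : Integrable (fun x : ℝ => x ^ 4) (gaussianReal 0 1) := by
    refine h.congr (Eventually.of_forall fun x => ?_)
    simp [Even.pow_abs (by decide : Even 4)]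
  exact h2.lintegral_lt_top

lemma coord_moment (hγ : IsStdBMVec 4 P γ) {s : ℝ} (hs : 0 ≤ s) (i : Fin 4) :
    ∫⁻ ω, ENNReal.ofReal ((γ s ω i) ^ 4) ∂P = ENNReal.ofReal (s ^ 2) * gM := by
  have h0 := (hγ.coord i).gauss 0 s le_rfl hs
  have h1 : P.map (fun ω => γ s ω i) = gaussianReal 0 (Real.toNNReal s) := by
    have : ∀ ω, γ 0 ω i = 0 := (hγ.coord i).start
    simp only [this, sub_zero] at h0
    exact h0
  have h2 : (gaussianReal 0 1).map (fun x => √s * x) = gaussianReal 0 (Real.toNNReal s) := by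
    rw [gaussianReal_map_const_mul]
    congr 1
    · simp
    · ext; simp [Real.sq_sqrt hs, hs]
  have hm : Measurable fun x : ℝ => ENNReal.ofReal (x ^ 4) := by fun_prop
  rw [← lintegral_map hm ((hγ.coord i).measurable s), h1, ← h2,
    lintegral_map hm (by fun_prop), gM, ← lintegral_const_mul _ hm]
  refine lintegral_congr fun x => ?_
  rw [← ENNReal.ofReal_mul (by positivity), mul_pow]
  congr 2
  calc √s ^ 4 = (√s ^ 2) ^ 2 := by ring
    _ = s ^ 2 := by rw [Real.sq_sqrt hs]

lemma U_moment (hγ : IsStdBMVec 4 P γ) {s : ℝ} (hs : 0 ≤ s) :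
    ∫⁻ ω, ENNReal.ofReal ((sqBessel4 γ s ω) ^ 2) ∂P ≤ ENNReal.ofReal (16 * s ^ 2) * gM := by
  calc ∫⁻ ω, ENNReal.ofReal ((sqBessel4 γ s ω) ^ 2) ∂P
      ≤ ∫⁻ ω, ∑ i, 4 * ENNReal.ofReal ((γ s ω i) ^ 4) ∂P := by
        refine lintegral_mono fun ω => ?_
        have h4 : (4 : ℝ≥0∞) = ENNReal.ofReal 4 := by simp
        simp only [h4]
        simp_rw [← ENNReal.ofReal_mul (show (0 : ℝ) ≤ 4 by norm_num)]
        rw [← ENNReal.ofReal_sum_of_nonneg (fun i _ => by positivity)]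
        refine ENNReal.ofReal_le_ofReal ?_
        rw [sqBessel4_eq]
        have := sq_sum_le_card_mul_sum_sq (s := (Finset.univ : Finset (Fin 4)))
          (f := fun i => (γ s ω i) ^ 2)
        simp only [← pow_mul, Finset.card_univ, Fintype.card_fin] at this
        rw [← Finset.mul_sum]
        exact_mod_cast this
    _ = ∑ i : Fin 4, 4 * (ENNReal.ofReal (s ^ 2) * gM) := by
        rw [lintegral_finset_sum]
        · refine Finset.sum_congr rfl fun i _ => ?_
          rw [lintegral_const_mul, coord_moment hγ hs]
          exact (((hγ.coord i).measurable s).pow_const 4).ennreal_ofReal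
        · intro i _
          exact (((hγ.coord i).measurable s).pow_const 4).ennreal_ofReal.const_mul _
    _ = _ := by
        rw [ENNReal.ofReal_mul (by norm_num)]
        simp only [Finset.sum_const, Finset.card_univ, Fintype.card_fin, nsmul_eq_mul]
        simp only [ENNReal.ofReal_ofNat, ← mul_assoc]
        norm_num

noncomputable def blockJ {Ω : Type*} (γ : ℝ → Ω → EuclideanSpace ℝ (Fin 4)) (n : ℕ) (ω : Ω) : ℝ≥0∞ :=
  ∫⁻ s in Ioc (2 * n : ℝ) (2 * n + 2), ENNReal.ofReal (sqBessel4 γ s ω)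

lemma noDrop_meas (hγ : IsStdBMVec 4 P γ) (n : ℕ) : MeasurableSet (noDrop γ n) := by
  have : noDrop γ n = ⋂ k ∈ Finset.range n, {ω | sqBessel4 γ ((2 * k + 1 : ℕ) : ℝ) ω
      - sqBessel4 γ ((2 * k + 2 : ℕ) : ℝ) ω < 1} := by
    ext ω; simp [noDrop]
  rw [this]
  exact Finset.measurableSet_biInter _ fun k hk =>
    ((U_meas hγ _).sub (U_meas hγ _)) measurableSet_Iio

lemma blockJ_meas (hγ : IsStdBMVec 4 P γ) (n : ℕ) : Measurable (blockJ γ n) :=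
  Measurable.lintegral_prod_right (f := fun ω s => ENNReal.ofReal (sqBessel4 γ s ω))
    (U_joint' hγ).ennreal_ofReal

lemma block_bound [IsProbabilityMeasure P] (hγ : IsStdBMVec 4 P γ) {r : ℝ} (hr0 : 0 < r) (n : ℕ)
    (hP : P (noDrop γ n) ≤ ENNReal.ofReal ((r ^ 2) ^ n)) :
    ∫⁻ ω, (noDrop γ n).indicator (blockJ γ n) ω ∂P ≤
      ENNReal.ofReal (2 * r ^ n + r ^ n * (16 * (2 * n + 2) ^ 2 * gM.toReal * 2)) := by
  set K : Ω → ℝ≥0∞ := fun ω =>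
    ∫⁻ s in Ioc (2 * n : ℝ) (2 * n + 2), ENNReal.ofReal (sqBessel4 γ s ω ^ 2) with hK
  have hjm : Measurable fun p : Ω × ℝ => ENNReal.ofReal (sqBessel4 γ p.2 p.1 ^ 2) :=
    ((U_joint' hγ).pow_const 2).ennreal_ofReal
  have hKm : Measurable K := Measurable.lintegral_prod_right hjm
  have hvol : (volume.restrict (Ioc (2 * n : ℝ) (2 * n + 2))) univ = ENNReal.ofReal 2 := by
    rw [Measure.restrict_apply_univ, Real.volume_Ioc]; congr 1; ring
  have hpt : ∀ ω, (noDrop γ n).indicator (blockJ γ n) ω ≤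
      (noDrop γ n).indicator (fun _ => ENNReal.ofReal (2 * (r ^ n)⁻¹)) ω
        + ENNReal.ofReal (r ^ n) * K ω := by
    intro ω
    by_cases hω : ω ∈ noDrop γ n
    · simp only [indicator_of_mem hω]
      have hsm : Measurable fun s => ENNReal.ofReal (sqBessel4 γ s ω ^ 2) :=
        ((U_cont hγ ω).pow 2).measurable.ennreal_ofReal
      calc blockJ γ n ω ≤ ∫⁻ s in Ioc (2 * n : ℝ) (2 * n + 2), (ENNReal.ofReal ((r ^ n)⁻¹)
            + ENNReal.ofReal (r ^ n) * ENNReal.ofReal (sqBessel4 γ s ω ^ 2)) := by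
            refine lintegral_mono fun s => ?_
            have hrn : 0 < r ^ n := by positivity
            rw [← ENNReal.ofReal_mul hrn.le, ← ENNReal.ofReal_add (by positivity) (by positivity)]
            refine ENNReal.ofReal_le_ofReal ?_
            generalize sqBessel4 γ s ω = x
            generalize r ^ n = b at hrn
            have hb : 0 < b⁻¹ := by positivity
            have hbb : b * b⁻¹ = 1 := mul_inv_cancel₀ hrn.ne'
            have : b⁻¹ + b * x ^ 2 - x = b * ((b⁻¹ - x / 2) ^ 2 + 3 / 4 * x ^ 2) := by
              field_simp; ring
            have : 0 ≤ b⁻¹ + b * x ^ 2 - x := by rw [this]; positivity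
            linarith
        _ = _ := by
            rw [lintegral_add_left measurable_const, lintegral_const, hvol,
              lintegral_const_mul _ hsm, mul_comm, ← ENNReal.ofReal_mul (by norm_num)]
    · simp [indicator_of_notMem hω]
  have hKint : ∫⁻ ω, K ω ∂P ≤ ENNReal.ofReal (16 * (2 * n + 2) ^ 2 * gM.toReal * 2) := by
    rw [hK, lintegral_lintegral_swap hjm.aemeasurable]
    calc _ ≤ ∫⁻ s in Ioc (2 * n : ℝ) (2 * n + 2),
            ENNReal.ofReal (16 * (2 * n + 2) ^ 2 * gM.toReal) := by
          refine setLIntegral_mono measurable_const fun s hs => ?_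
          have hs0 : 0 ≤ s := le_trans (by positivity) hs.1.le
          refine (U_moment hγ hs0).trans ?_
          rw [ENNReal.ofReal_mul (p := 16 * (2 * (n : ℝ) + 2) ^ 2) (by positivity),
            ENNReal.ofReal_toReal gM_lt_top.ne]
          gcongr
          exact hs.2
      _ = _ := by rw [lintegral_const, hvol, ← ENNReal.ofReal_mul (by positivity)]
  calc _ ≤ ∫⁻ ω, ((noDrop γ n).indicator (fun _ => ENNReal.ofReal (2 * (r ^ n)⁻¹)) ω
        + ENNReal.ofReal (r ^ n) * K ω) ∂P := lintegral_mono hpt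
    _ = ENNReal.ofReal (2 * (r ^ n)⁻¹) * P (noDrop γ n)
        + ENNReal.ofReal (r ^ n) * ∫⁻ ω, K ω ∂P := by
        rw [lintegral_add_left (measurable_const.indicator (noDrop_meas hγ n)),
          lintegral_indicator_const (noDrop_meas hγ n), lintegral_const_mul _ hKm]
    _ ≤ ENNReal.ofReal (2 * (r ^ n)⁻¹) * ENNReal.ofReal ((r ^ 2) ^ n)
        + ENNReal.ofReal (r ^ n) * ENNReal.ofReal (16 * (2 * n + 2) ^ 2 * gM.toReal * 2) := by
        gcongr
    _ = _ := by
        rw [← ENNReal.ofReal_mul (by positivity), ← ENNReal.ofReal_mul (by positivity),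
          ← ENNReal.ofReal_add (by positivity) (by positivity)]
        congr 2
        field_simp
        ring

lemma sum_bound {r : ℝ} (hr0 : 0 < r) (hr1 : r < 1) (M : ℝ) :
    Summable fun n : ℕ => 2 * r ^ n + r ^ n * (16 * (2 * (n : ℝ) + 2) ^ 2 * M * 2) := by
  have hr : ‖r‖ < 1 := by rwa [Real.norm_of_nonneg hr0.le]
  have h0 := summable_pow_mul_geometric_of_norm_lt_one 0 hr
  have h1 := summable_pow_mul_geometric_of_norm_lt_one 1 hr
  have h2 := summable_pow_mul_geometric_of_norm_lt_one 2 hr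
  refine (((h0.mul_left (2 + 128 * M)).add (h1.mul_left (256 * M))).add
    (h2.mul_left (128 * M))).congr fun n => ?_
  ring

lemma cover_bound (f : ℝ → ℝ≥0∞) (N : ℕ) : ∫⁻ s in Ioc (0 : ℝ) (2 * N), f s ≤
    ∑ n ∈ Finset.range N, ∫⁻ s in Ioc (2 * n : ℝ) (2 * n + 2), f s := by
  induction N with
  | zero => simp
  | succ N ih =>
    rw [Finset.sum_range_succ]
    have : Ioc (0 : ℝ) (2 * (N + 1 : ℕ)) ⊆ Ioc (0 : ℝ) (2 * N) ∪ Ioc (2 * N : ℝ) (2 * N + 2) := by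
      intro x hx
      have h2 := hx.2
      push_cast at h2
      rcases le_or_gt x (2 * N) with h | h
      · exact Or.inl ⟨hx.1, h⟩
      · exact Or.inr ⟨h, by linarith⟩
    refine (lintegral_mono_set this).trans ((lintegral_union_le _ _ _).trans ?_)
    gcongr

lemma pathwise (hγ : IsStdBMVec 4 P γ) (ω : Ω) :
    ‖∫ s in (0:ℝ)..(ddTime 1 (sqBessel4 γ) ω), sqBessel4 γ s ω‖ₑ ≤
      ∑' n, (noDrop γ n).indicator (blockJ γ n) ω := by
  obtain ⟨N, hN1, hN2⟩ : ∃ N : ℕ, ddTime 1 (sqBessel4 γ) ω ≤ 2 * N ∧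
      ∀ n < N, ω ∈ noDrop γ n := by
    by_cases h : ∀ n, ω ∈ noDrop γ n
    · refine ⟨⌈ddTime 1 (sqBessel4 γ) ω⌉₊, ?_, fun n _ => h n⟩
      have := Nat.le_ceil (ddTime 1 (sqBessel4 γ) ω)
      have h0 := ddTime_nonneg γ ω
      linarith
    · push Not at h
      classical
      refine ⟨Nat.find h, ?_, fun n hn => by simpa using Nat.find_min h hn⟩
      have hs := Nat.find_spec h
      obtain ⟨k, hk, hd⟩ : ∃ k < Nat.find h, 1 ≤ sqBessel4 γ ((2 * k + 1 : ℕ) : ℝ) ω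
          - sqBessel4 γ ((2 * k + 2 : ℕ) : ℝ) ω := by
        by_contra hc
        push Not at hc
        exact hs hc
      have hle : ddTime 1 (sqBessel4 γ) ω ≤ ((2 * k + 2 : ℕ) : ℝ) := by
        refine csInf_le ⟨0, fun _ h => h.1⟩ ⟨by positivity, ?_⟩
        have := le_runMax hγ ω (u := ((2 * k + 1 : ℕ) : ℝ)) (t := ((2 * k + 2 : ℕ) : ℝ))
          (by positivity) (by exact_mod_cast (by omega))
        linarith
      refine hle.trans ?_
      have : 2 * k + 2 ≤ 2 * Nat.find h := by
        have : k < Nat.find h := hk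
        omega
      exact_mod_cast this
  rw [intervalIntegral.integral_of_le (ddTime_nonneg γ ω)]
  calc _ ≤ ∫⁻ s in Ioc (0 : ℝ) (ddTime 1 (sqBessel4 γ) ω), ‖sqBessel4 γ s ω‖ₑ :=
        enorm_integral_le_lintegral_enorm _
    _ ≤ ∫⁻ s in Ioc (0 : ℝ) (2 * N), ‖sqBessel4 γ s ω‖ₑ :=
        lintegral_mono_set (Ioc_subset_Ioc_right hN1)
    _ = ∫⁻ s in Ioc (0 : ℝ) (2 * N), ENNReal.ofReal (sqBessel4 γ s ω) := by
        refine lintegral_congr fun s => Real.enorm_of_nonneg (U_nonneg γ s ω)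
    _ ≤ ∑ n ∈ Finset.range N, blockJ γ n ω := cover_bound _ N
    _ = ∑ n ∈ Finset.range N, (noDrop γ n).indicator (blockJ γ n) ω := by
        refine Finset.sum_congr rfl fun n hn => ?_
        rw [indicator_of_mem (hN2 n (Finset.mem_range.1 hn))]
    _ ≤ _ := ENNReal.sum_le_tsum _

end

/-- with `A(t) := ∫₀^t U(s) ds` for a squared four-dimensional Bessel
process `U` started at `0` and `τ₁` its unit drawdown time,
`E[A(τ₁)] = E[∫₀^{τ₁} U(s) ds] < ∞`, i.e. `A(τ₁)` is integrable. -/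
theorem sqBessel4_time_integral_at_drawdown_time_integrable
    {Ω : Type*} [MeasurableSpace Ω] (P : Measure Ω) [IsProbabilityMeasure P]
    (γ : ℝ → Ω → EuclideanSpace ℝ (Fin 4)) (hγ : IsStdBMVec 4 P γ) :
    Integrable
      (fun ω => ∫ s in (0:ℝ)..(ddTime 1 (sqBessel4 γ) ω), sqBessel4 γ s ω) P := by
  refine ⟨(integral_meas hγ).aestronglyMeasurable, ?_⟩
  obtain ⟨r, hr0, hr1, hr⟩ := exists_decay hγ
  calc _ ≤ ∫⁻ ω, ∑' n, (noDrop γ n).indicator (blockJ γ n) ω ∂P :=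
        lintegral_mono fun ω => pathwise hγ ω
    _ = ∑' n, ∫⁻ ω, (noDrop γ n).indicator (blockJ γ n) ω ∂P :=
        lintegral_tsum fun n => ((blockJ_meas hγ n).indicator (noDrop_meas hγ n)).aemeasurable
    _ ≤ ∑' n : ℕ, ENNReal.ofReal
          (2 * r ^ n + r ^ n * (16 * (2 * (n : ℝ) + 2) ^ 2 * gM.toReal * 2)) :=
        ENNReal.tsum_le_tsum fun n => block_bound hγ hr0 n (hr n)
    _ < ∞ := (sum_bound hr0 hr1 gM.toReal).tsum_ofReal_lt_top
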